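/- arXiv:1505.06453 — 2 statements merged into one kernel-verified Lean document; each statement's English description precedes it below -/
import Mathlib

section
/- Let B : ℝ → ℝ be smooth, let Ω ⊆ ℝ² × (0,∞) be open, and let u : Ω → ℝ be a C² function such that for all (x,y,t) ∈ Ω one has u(x,y,t) = t^{−1/2}·B(x − y²/(4t) − 2t·u(x,y,t)) and 1 + 2√t·B′(x − y²/(4t) − 2t·u(x,y,t)) ≠ 0. Then u solves the dispersionless KP equation ∂_x(u_t + u·u_x) = u_yy at every point of Ω. -/
noncomputable section

/-- Partial derivative in the first argument of a curried 3-variable function. -/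
def pd1 (f : ℝ → ℝ → ℝ → ℝ) (a b c : ℝ) : ℝ := deriv (fun s => f s b c) a

/-- Partial derivative in the second argument of a curried 3-variable function. -/
def pd2 (f : ℝ → ℝ → ℝ → ℝ) (a b c : ℝ) : ℝ := deriv (fun s => f a s c) b

/-- Partial derivative in the third argument of a curried 3-variable function. -/
def pd3 (f : ℝ → ℝ → ℝ → ℝ) (a b c : ℝ) : ℝ := deriv (fun s => f a b s) c

/-!
Write `ξ = x - y² / (4t) - 2tu`, so that `√t * u = B ξ`. The fields `∂_y + (y / 2t) ∂_x` and
`∂_t + (u - y² / 4t²) ∂_x` are chosen so that along each of them there is a scalar `r` for which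
the derivative of `√t * u` is `√t * r` while that of `ξ` is `-2t * r`. The chain rule gives
`√t * (1 + 2√t * B' ξ) * r = 0`, hence `r = 0`: if the middle factor vanished, then the chain rule
along `∂_x`, which reads `√t * (1 + 2√t * B' ξ) * u_x = B' ξ`, would give `B' ξ = 0` and make that
factor `1`. The two equations `r = 0` are `u_y = -(y / 2t) u_x` and
`u_t + u u_x = -u / 2t + (y² / 4t²) u_x`, free of `B`. Differentiating them once more, with
`u_xy = u_yx`, both sides of dKP become `-u_x / 2t + (y² / 4t²) u_xx`.
-/

open scoped Topology

section SecondOrderDifferentiability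

variable {𝕜 E F : Type*} [NontriviallyNormedField 𝕜] [NormedAddCommGroup E] [NormedSpace 𝕜 E]
  [NormedAddCommGroup F] [NormedSpace 𝕜 F] {f : E → F} {p : E}

theorem eventually_differentiableAt_of_contDiffAt_two (hf : ContDiffAt 𝕜 2 f p) :
    ∀ᶠ q in 𝓝 p, DifferentiableAt 𝕜 f q :=
  (hf.eventually (by simp)).mono fun _ hq => hq.differentiableAt two_ne_zero

theorem differentiableAt_fderiv_of_contDiffAt_two (hf : ContDiffAt 𝕜 2 f p) :
    DifferentiableAt 𝕜 (fderiv 𝕜 f) p :=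
  (hf.fderiv_right (m := 1) (by norm_num)).differentiableAt one_ne_zero

end SecondOrderDifferentiability

section Slices

variable {X Y T : Type*} [TopologicalSpace X] [TopologicalSpace Y] [TopologicalSpace T]
  {P : X × Y × T → Prop} {x : X} {y : Y} {t : T}

theorem eventually_nhds_fst_slice (h : ∀ᶠ p in 𝓝 (x, y, t), P p) : ∀ᶠ s in 𝓝 x, P (s, y, t) :=
  (Continuous.tendsto (f := fun s : X => (s, y, t)) (by fun_prop) x).eventually h

theorem eventually_nhds_snd_slice (h : ∀ᶠ p in 𝓝 (x, y, t), P p) : ∀ᶠ s in 𝓝 y, P (x, s, t) :=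
  (Continuous.tendsto (f := fun s : Y => (x, s, t)) (by fun_prop) y).eventually h

end Slices

section PartialDerivatives

variable {f : ℝ → ℝ → ℝ → ℝ} {x y t : ℝ}

theorem hasDerivAt_pd1 (hf : DifferentiableAt ℝ ↿f (x, y, t)) :
    HasDerivAt (fun s => f s y t) (pd1 f x y t) x :=
  (hf.comp (f := fun s : ℝ => (s, y, t)) x (by fun_prop)).hasDerivAt

theorem hasDerivAt_pd2 (hf : DifferentiableAt ℝ ↿f (x, y, t)) :
    HasDerivAt (fun s => f x s t) (pd2 f x y t) y :=
  (hf.comp (f := fun s : ℝ => (x, s, t)) y (by fun_prop)).hasDerivAt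

theorem pd1_eq_fderiv (hf : DifferentiableAt ℝ ↿f (x, y, t)) :
    pd1 f x y t = fderiv ℝ ↿f (x, y, t) (1, 0, 0) :=
  (hf.hasFDerivAt.comp_hasDerivAt (f := fun s : ℝ => (s, y, t)) x
    ((hasDerivAt_id x).prodMk ((hasDerivAt_const x y).prodMk (hasDerivAt_const x t)))).deriv

theorem pd2_eq_fderiv (hf : DifferentiableAt ℝ ↿f (x, y, t)) :
    pd2 f x y t = fderiv ℝ ↿f (x, y, t) (0, 1, 0) :=
  (hf.hasFDerivAt.comp_hasDerivAt (f := fun s : ℝ => (x, s, t)) y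
    ((hasDerivAt_const y x).prodMk ((hasDerivAt_id y).prodMk (hasDerivAt_const y t)))).deriv

theorem pd3_eq_fderiv (hf : DifferentiableAt ℝ ↿f (x, y, t)) :
    pd3 f x y t = fderiv ℝ ↿f (x, y, t) (0, 0, 1) :=
  (hf.hasFDerivAt.comp_hasDerivAt (f := fun s : ℝ => (x, y, s)) t
    ((hasDerivAt_const t x).prodMk ((hasDerivAt_const t y).prodMk (hasDerivAt_id t)))).deriv

theorem fderiv_uncurry_apply (hf : DifferentiableAt ℝ ↿f (x, y, t)) (a b c : ℝ) :
    fderiv ℝ ↿f (x, y, t) (a, b, c) = a * pd1 f x y t + b * pd2 f x y t + c * pd3 f x y t := by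
  have hv : ((a, b, c) : ℝ × ℝ × ℝ) =
      a • ((1, 0, 0) : ℝ × ℝ × ℝ) + b • ((0, 1, 0) : ℝ × ℝ × ℝ) + c • ((0, 0, 1) : ℝ × ℝ × ℝ) := by
    simp
  simp only [hv, map_add, map_smul, smul_eq_mul, pd1_eq_fderiv hf, pd2_eq_fderiv hf,
    pd3_eq_fderiv hf]

theorem pd1_eventuallyEq_fderiv (hf : ContDiffAt ℝ 2 ↿f (x, y, t)) :
    ↿(pd1 f) =ᶠ[𝓝 (x, y, t)] fun p => fderiv ℝ ↿f p (1, 0, 0) :=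
  (eventually_differentiableAt_of_contDiffAt_two hf).mono fun _ => pd1_eq_fderiv

theorem pd2_eventuallyEq_fderiv (hf : ContDiffAt ℝ 2 ↿f (x, y, t)) :
    ↿(pd2 f) =ᶠ[𝓝 (x, y, t)] fun p => fderiv ℝ ↿f p (0, 1, 0) :=
  (eventually_differentiableAt_of_contDiffAt_two hf).mono fun _ => pd2_eq_fderiv

theorem differentiableAt_pd1 (hf : ContDiffAt ℝ 2 ↿f (x, y, t)) :
    DifferentiableAt ℝ ↿(pd1 f) (x, y, t) :=
  ((differentiableAt_fderiv_of_contDiffAt_two hf).clm_apply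
    (differentiableAt_const _)).congr_of_eventuallyEq (pd1_eventuallyEq_fderiv hf)

theorem differentiableAt_pd2 (hf : ContDiffAt ℝ 2 ↿f (x, y, t)) :
    DifferentiableAt ℝ ↿(pd2 f) (x, y, t) :=
  ((differentiableAt_fderiv_of_contDiffAt_two hf).clm_apply
    (differentiableAt_const _)).congr_of_eventuallyEq (pd2_eventuallyEq_fderiv hf)

theorem pd2_pd1_eq_pd1_pd2 (hf : ContDiffAt ℝ 2 ↿f (x, y, t)) :
    pd2 (pd1 f) x y t = pd1 (pd2 f) x y t := by
  have hd := differentiableAt_fderiv_of_contDiffAt_two hf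
  have hsymm : IsSymmSndFDerivAt ℝ ↿f (x, y, t) := hf.isSymmSndFDerivAt (by simp)
  rw [pd2_eq_fderiv (differentiableAt_pd1 hf), pd1_eq_fderiv (differentiableAt_pd2 hf),
    (pd1_eventuallyEq_fderiv hf).fderiv_eq, (pd2_eventuallyEq_fderiv hf).fderiv_eq,
    fderiv_clm_apply hd (differentiableAt_const _), fderiv_clm_apply hd (differentiableAt_const _)]
  simpa using hsymm (0, 1, 0) (1, 0, 0)

end PartialDerivatives

section FirstOrderSystem

variable {u : ℝ → ℝ → ℝ → ℝ} {x y t : ℝ}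

theorem pd2_pd2_of_pd2_eq (hu : ContDiffAt ℝ 2 ↿u (x, y, t))
    (hy : ∀ᶠ p : ℝ × ℝ × ℝ in 𝓝 (x, y, t),
      ↿(pd2 u) p = -(p.2.1 / (2 * p.2.2)) * ↿(pd1 u) p) :
    pd2 (pd2 u) x y t =
      -(1 / (2 * t)) * pd1 u x y t + y ^ 2 / (4 * t ^ 2) * pd1 (pd1 u) x y t := by
  have huxx := hasDerivAt_pd1 (differentiableAt_pd1 hu)
  have huxy := hasDerivAt_pd2 (differentiableAt_pd1 hu)
  have hxy : pd1 (pd2 u) x y t = -(y / (2 * t)) * pd1 (pd1 u) x y t :=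
    ((huxx.const_mul (-(y / (2 * t)))).congr_of_eventuallyEq
      (eventually_nhds_fst_slice hy)).deriv
  have hyy : pd2 (pd2 u) x y t =
      -(1 / (2 * t)) * pd1 u x y t + -(y / (2 * t)) * pd2 (pd1 u) x y t :=
    ((((hasDerivAt_id y).div_const (2 * t)).neg.mul huxy).congr_of_eventuallyEq
      (eventually_nhds_snd_slice hy)).deriv
  rw [hyy, pd2_pd1_eq_pd1_pd2 hu, hxy]
  ring

theorem dKP_of_firstOrderSystem (hu : ContDiffAt ℝ 2 ↿u (x, y, t))
    (hy : ∀ᶠ p : ℝ × ℝ × ℝ in 𝓝 (x, y, t),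
      ↿(pd2 u) p = -(p.2.1 / (2 * p.2.2)) * ↿(pd1 u) p)
    (ht : ∀ᶠ p : ℝ × ℝ × ℝ in 𝓝 (x, y, t),
      ↿(pd3 u) p + ↿u p * ↿(pd1 u) p =
        -(1 / (2 * p.2.2)) * ↿u p + p.2.1 ^ 2 / (4 * p.2.2 ^ 2) * ↿(pd1 u) p) :
    pd1 (fun x' y' t' => pd3 u x' y' t' + u x' y' t' * pd1 u x' y' t') x y t =
      pd2 (pd2 u) x y t := by
  have hux := hasDerivAt_pd1 (hu.differentiableAt two_ne_zero)
  have huxx := hasDerivAt_pd1 (differentiableAt_pd1 hu)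
  rw [pd2_pd2_of_pd2_eq hu hy]
  exact (((hux.const_mul (-(1 / (2 * t)))).add
    (huxx.const_mul (y ^ 2 / (4 * t ^ 2)))).congr_of_eventuallyEq
    (eventually_nhds_fst_slice ht)).deriv

end FirstOrderSystem

section SimilarityRelation

/-- The similarity variable `ξ = x - y² / (4t) - 2tu` at which the profile `B` is evaluated. -/
def phase (u : ℝ → ℝ → ℝ → ℝ) (x y t : ℝ) : ℝ := x - y ^ 2 / (4 * t) - 2 * t * u x y t

variable {B : ℝ → ℝ} {u : ℝ → ℝ → ℝ → ℝ} {x y t : ℝ}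

open ContinuousLinearMap in
theorem hasFDerivAt_phase (ht : t ≠ 0) (hu : DifferentiableAt ℝ ↿u (x, y, t)) :
    HasFDerivAt ↿(phase u)
      (fst ℝ ℝ (ℝ × ℝ) - (y / (2 * t)) • (fst ℝ ℝ ℝ ∘L snd ℝ ℝ (ℝ × ℝ))
        + (y ^ 2 / (4 * t ^ 2) - 2 * u x y t) • (snd ℝ ℝ ℝ ∘L snd ℝ ℝ (ℝ × ℝ))
        - (2 * t) • fderiv ℝ ↿u (x, y, t)) (x, y, t) := by
  have hX : HasFDerivAt (fun p : ℝ × ℝ × ℝ => p.1) (fst ℝ ℝ (ℝ × ℝ)) (x, y, t) := hasFDerivAt_fst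
  have hY : HasFDerivAt (fun p : ℝ × ℝ × ℝ => p.2.1) (fst ℝ ℝ ℝ ∘L snd ℝ ℝ (ℝ × ℝ)) (x, y, t) :=
    hasFDerivAt_snd.fst
  have hT : HasFDerivAt (fun p : ℝ × ℝ × ℝ => p.2.2) (snd ℝ ℝ ℝ ∘L snd ℝ ℝ (ℝ × ℝ)) (x, y, t) :=
    hasFDerivAt_snd.snd
  have h4t : 4 * t ≠ 0 := by positivity
  have hinv : HasFDerivAt (fun p : ℝ × ℝ × ℝ => (4 * p.2.2)⁻¹) _ (x, y, t) :=
    (hasDerivAt_inv h4t).comp_hasFDerivAt (x, y, t) (hT.const_mul 4)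
  refine ((hX.sub ((hY.pow 2).mul hinv)).sub
    ((hT.const_mul 2).mul hu.hasFDerivAt)).congr_fderiv ?_
  ext <;> simp [Function.HasUncurry.uncurry] <;> field_simp <;> ring

/-- The implicit relation `u = t^{-1/2} B(ξ)` defining the Manakov–Santini family, required on a
neighbourhood of `(x, y, t)` so that it can be differentiated there. -/
def IsSimilaritySolutionAt (B : ℝ → ℝ) (u : ℝ → ℝ → ℝ → ℝ) (x y t : ℝ) : Prop :=
  ∀ᶠ p : ℝ × ℝ × ℝ in 𝓝 (x, y, t), ↿u p = (√p.2.2)⁻¹ * B (↿(phase u) p)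

theorem IsSimilaritySolutionAt.sqrt_mul_fderiv_add (h : IsSimilaritySolutionAt B u x y t)
    (ht : 0 < t) (hu : DifferentiableAt ℝ ↿u (x, y, t))
    (hB : DifferentiableAt ℝ B (phase u x y t)) (a b c : ℝ) :
    √t * fderiv ℝ ↿u (x, y, t) (a, b, c) + c / (2 * √t) * u x y t =
      deriv B (phase u x y t) *
        (a - y / (2 * t) * b + (y ^ 2 / (4 * t ^ 2) - 2 * u x y t) * c
          - 2 * t * fderiv ℝ ↿u (x, y, t) (a, b, c)) := by
  have hT : HasFDerivAt (fun p : ℝ × ℝ × ℝ => p.2.2) _ (x, y, t) :=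
    (hasFDerivAt_snd (𝕜 := ℝ) (p := (x, y, t))).snd
  have hBξ := hB.hasDerivAt.comp_hasFDerivAt (x, y, t) (hasFDerivAt_phase ht.ne' hu)
  have hpos : ∀ᶠ p : ℝ × ℝ × ℝ in 𝓝 (x, y, t), 0 < p.2.2 :=
    hT.continuousAt.eventually_const_lt ht
  have hrel : (fun p : ℝ × ℝ × ℝ => √p.2.2 * ↿u p) =ᶠ[𝓝 (x, y, t)] B ∘ ↿(phase u) := by
    filter_upwards [h, hpos] with p hp hp_pos
    exact (eq_inv_mul_iff_mul_eq₀ (Real.sqrt_pos.2 hp_pos).ne').1 hp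
  have hunique := ((hT.sqrt ht.ne').mul hu.hasFDerivAt).unique (hBξ.congr_of_eventuallyEq hrel)
  have happly := DFunLike.congr_fun hunique (a, b, c)
  simp only [add_apply, sub_apply, smul_apply, ContinuousLinearMap.comp_apply,
    ContinuousLinearMap.coe_fst', ContinuousLinearMap.coe_snd', smul_eq_mul] at happly
  change _ + u x y t * _ = _ at happly
  linear_combination happly

theorem IsSimilaritySolutionAt.one_add_sqrt_mul_deriv_ne_zero
    (h : IsSimilaritySolutionAt B u x y t) (ht : 0 < t) (hu : DifferentiableAt ℝ ↿u (x, y, t))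
    (hB : DifferentiableAt ℝ B (phase u x y t)) :
    1 + 2 * √t * deriv B (phase u x y t) ≠ 0 := by
  intro hzero
  have hsq := Real.sq_sqrt ht.le
  have hchain := h.sqrt_mul_fderiv_add ht hu hB 1 0 0
  have hBzero : deriv B (phase u x y t) = 0 := by
    linear_combination √t * fderiv ℝ ↿u (x, y, t) (1, 0, 0) * hzero - hchain -
      2 * deriv B (phase u x y t) * fderiv ℝ ↿u (x, y, t) (1, 0, 0) * hsq
  simp [hBzero] at hzero

theorem IsSimilaritySolutionAt.eq_zero_of_sqrt_mul_eq (h : IsSimilaritySolutionAt B u x y t)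
    (ht : 0 < t) (hu : DifferentiableAt ℝ ↿u (x, y, t))
    (hB : DifferentiableAt ℝ B (phase u x y t)) {r : ℝ}
    (hr : √t * r = deriv B (phase u x y t) * (-2 * t * r)) : r = 0 := by
  have hprod : √t * (1 + 2 * √t * deriv B (phase u x y t)) * r = 0 := by
    linear_combination hr + 2 * deriv B (phase u x y t) * r * Real.sq_sqrt ht.le
  exact (mul_eq_zero.1 hprod).resolve_left
    (mul_ne_zero (Real.sqrt_pos.2 ht).ne' (h.one_add_sqrt_mul_deriv_ne_zero ht hu hB))

theorem IsSimilaritySolutionAt.pd2_eq (h : IsSimilaritySolutionAt B u x y t) (ht : 0 < t)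
    (hu : DifferentiableAt ℝ ↿u (x, y, t)) (hB : DifferentiableAt ℝ B (phase u x y t)) :
    pd2 u x y t = -(y / (2 * t)) * pd1 u x y t := by
  have hr : fderiv ℝ ↿u (x, y, t) (y / (2 * t), 1, 0) = 0 :=
    h.eq_zero_of_sqrt_mul_eq ht hu hB (by
      linear_combination h.sqrt_mul_fderiv_add ht hu hB (y / (2 * t)) 1 0)
  rw [fderiv_uncurry_apply hu] at hr
  linear_combination hr

theorem IsSimilaritySolutionAt.pd3_add_mul_pd1_eq (h : IsSimilaritySolutionAt B u x y t)
    (ht : 0 < t) (hu : DifferentiableAt ℝ ↿u (x, y, t))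
    (hB : DifferentiableAt ℝ B (phase u x y t)) :
    pd3 u x y t + u x y t * pd1 u x y t =
      -(1 / (2 * t)) * u x y t + y ^ 2 / (4 * t ^ 2) * pd1 u x y t := by
  have hsqrt : √t / (2 * t) = 1 / (2 * √t) := by
    rw [div_eq_div_iff (by positivity) (by positivity)]
    linear_combination 2 * Real.sq_sqrt ht.le
  have ht_div : 2 * t * (u x y t / (2 * t)) = u x y t := mul_div_cancel₀ _ (by positivity)
  have hr : fderiv ℝ ↿u (x, y, t) (u x y t - y ^ 2 / (4 * t ^ 2), 0, 1) + u x y t / (2 * t) = 0 :=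
    h.eq_zero_of_sqrt_mul_eq ht hu hB (by
      linear_combination h.sqrt_mul_fderiv_add ht hu hB (u x y t - y ^ 2 / (4 * t ^ 2)) 0 1 +
        u x y t * hsqrt + deriv B (phase u x y t) * ht_div)
  rw [fderiv_uncurry_apply hu] at hr
  linear_combination hr

end SimilarityRelation

theorem exact_family_solves_dKP_general
    (B : ℝ → ℝ) (Ω : Set (ℝ × ℝ × ℝ)) (hΩ : IsOpen Ω) (hΩt : ∀ p ∈ Ω, 0 < p.2.2)
    (u : ℝ → ℝ → ℝ → ℝ) (hu : ContDiffOn ℝ 2 ↿u Ω)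
    (hB : ∀ x y t : ℝ, (x, y, t) ∈ Ω → DifferentiableAt ℝ B (phase u x y t))
    (heq : ∀ x y t : ℝ, (x, y, t) ∈ Ω → u x y t = (√t)⁻¹ * B (phase u x y t)) :
    ∀ x y t : ℝ, (x, y, t) ∈ Ω →
      pd1 (fun x' y' t' => pd3 u x' y' t' + u x' y' t' * pd1 u x' y' t') x y t
        = pd2 (pd2 u) x y t := by
  have hsol : ∀ x y t : ℝ, (x, y, t) ∈ Ω → IsSimilaritySolutionAt B u x y t := fun x y t hp =>
    (hΩ.eventually_mem hp).mono fun q hq => heq q.1 q.2.1 q.2.2 hq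
  have hdiff : ∀ x y t : ℝ, (x, y, t) ∈ Ω → DifferentiableAt ℝ ↿u (x, y, t) := fun x y t hp =>
    (hu.contDiffAt (hΩ.mem_nhds hp)).differentiableAt two_ne_zero
  intro x y t hp
  refine dKP_of_firstOrderSystem (hu.contDiffAt (hΩ.mem_nhds hp)) ?_ ?_
  · filter_upwards [hΩ.mem_nhds hp] with ⟨x', y', t'⟩ hq
    exact (hsol x' y' t' hq).pd2_eq (hΩt _ hq) (hdiff x' y' t' hq) (hB x' y' t' hq)
  · filter_upwards [hΩ.mem_nhds hp] with ⟨x', y', t'⟩ hq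
    exact (hsol x' y' t' hq).pd3_add_mul_pd1_eq (hΩt _ hq) (hdiff x' y' t' hq) (hB x' y' t' hq)

/-- The Manakov–Santini family of exact solutions
`u = t^{-1/2} B(x - y²/(4t) - 2tu)` solves the dKP equation
`∂_x(u_t + u u_x) = u_yy` wherever the implicit definition is nondegenerate. -/
theorem exact_family_solves_dKP
    (B : ℝ → ℝ) (hB : ContDiff ℝ (⊤ : ℕ∞) B)
    (Ω : Set (ℝ × ℝ × ℝ)) (hΩ : IsOpen Ω)
    (hΩt : ∀ p ∈ Ω, 0 < p.2.2)
    (u : ℝ → ℝ → ℝ → ℝ)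
    (hu : ContDiffOn ℝ 2 (fun p : ℝ × ℝ × ℝ => u p.1 p.2.1 p.2.2) Ω)
    (heq : ∀ x y t : ℝ, (x, y, t) ∈ Ω →
      u x y t = (Real.sqrt t)⁻¹ * B (x - y ^ 2 / (4 * t) - 2 * t * u x y t))
    (hnd : ∀ x y t : ℝ, (x, y, t) ∈ Ω →
      1 + 2 * Real.sqrt t * deriv B (x - y ^ 2 / (4 * t) - 2 * t * u x y t) ≠ 0) :
    ∀ x y t : ℝ, (x, y, t) ∈ Ω →
      pd1 (fun x' y' t' => pd3 u x' y' t' + u x' y' t' * pd1 u x' y' t') x y t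
        = pd2 (pd2 u) x y t :=
  exact_family_solves_dKP_general B Ω hΩ hΩt u hu
    (fun _ _ _ _ => hB.differentiable (by simp) _) heq
end
end

section
/- For t > 0 the Cole–Hopf function v(·,·;ν) is smooth in (x,t) and solves the Burgers equation v_t + v·v_x = ν·v_xx at every point (x,t) ∈ ℝ × (0,∞). -/
/-!
Completing the square, the measure `exp (-G / (2 ν)) dη` is, up to a factor independent of `η`, the
member `exp (a η + b η²) dμ(η)` of an exponential family, with parameters `a = x / (2 ν t)` and
`b = -1 / (4 ν t)`, where `dμ = exp (-U / (2 ν)) dη` and `U' = v₀`. Its mean `m` gives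
`v = (x - m) / t`. Differentiating under the integral, `∂ₐ` multiplies the integrand by `η` and
`∂_b` by `η²`. Hence with `r` the second moment, `mₐ = r - m²` and `m_b = rₐ` (both sides are the
covariance of `η` and `η²`), so `m_b = mₐₐ + 2 m mₐ`. This is the Burgers equation, and the
projective change of variables `(x, t) ↦ (a, b)` carries it to `v_t + v v_x = ν v_xx`.
-/

noncomputable section

open MeasureTheory

/-- Partial derivative in the first argument of a curried 2-variable function. -/
def qd1 (f : ℝ → ℝ → ℝ) (a b : ℝ) : ℝ := deriv (fun s => f s b) a

/-- Partial derivative in the second argument of a curried 2-variable function. -/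
def qd2 (f : ℝ → ℝ → ℝ) (a b : ℝ) : ℝ := deriv (fun s => f a s) b

section PartialDerivatives

variable {𝕜 E : Type*} [NontriviallyNormedField 𝕜] [NormedAddCommGroup E] [NormedSpace 𝕜 E]
  {F : 𝕜 × 𝕜 → E} {F' : 𝕜 × 𝕜 →L[𝕜] E} {a b : 𝕜}

lemma hasDerivAt_left_of_hasFDerivAt (hF : HasFDerivAt F F' (a, b)) :
    HasDerivAt (fun s => F (s, b)) (F' (1, 0)) a :=
  hF.comp_hasDerivAt (f := fun s => (s, b)) a ((hasDerivAt_id a).prodMk (hasDerivAt_const a b))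

lemma hasDerivAt_right_of_hasFDerivAt (hF : HasFDerivAt F F' (a, b)) :
    HasDerivAt (fun s => F (a, s)) (F' (0, 1)) b :=
  hF.comp_hasDerivAt (f := fun s => (a, s)) b ((hasDerivAt_const b a).prodMk (hasDerivAt_id b))

lemma qd1_congr {f g : ℝ → ℝ → ℝ} {b : ℝ} (h : ∀ s, f s b = g s b) (a : ℝ) :
    qd1 f a b = qd1 g a b := by
  rw [qd1, qd1, funext h]

lemma qd2_congr {f g : ℝ → ℝ → ℝ} {a b : ℝ} (h : ∀ᶠ s in nhds b, f a s = g a s) :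
    qd2 f a b = qd2 g a b :=
  Filter.EventuallyEq.deriv_eq h

lemma hasDerivAt_comp_curve {f : ℝ → ℝ → ℝ} {α β : ℝ → ℝ} {α' β' t : ℝ}
    (hf : DifferentiableAt ℝ (fun p : ℝ × ℝ => f p.1 p.2) (α t, β t))
    (hα : HasDerivAt α α' t) (hβ : HasDerivAt β β' t) :
    HasDerivAt (fun s => f (α s) (β s))
      (qd1 f (α t) (β t) * α' + qd2 f (α t) (β t) * β') t := by
  have total := hf.hasFDerivAt
  refine (total.comp_hasDerivAt (f := fun s => (α s, β s)) t (hα.prodMk hβ)).congr_deriv ?_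
  rw [qd1, qd2, (hasDerivAt_left_of_hasFDerivAt total).deriv,
    (hasDerivAt_right_of_hasFDerivAt total).deriv,
    show (α', β') = α' • ((1 : ℝ), (0 : ℝ)) + β' • ((0 : ℝ), (1 : ℝ)) by simp, map_add, map_smul,
    map_smul, smul_eq_mul, smul_eq_mul, mul_comm α', mul_comm β']

end PartialDerivatives

section ProjectiveTransform

/-- The projective symmetry `(x, t) ↦ (x / t, -1 / t)` of the Burgers equation, scaled so that it
carries solutions of `m_b = mₐₐ + 2 m mₐ` on `b < 0` to solutions of `v_t + v v_x = ν v_xx` on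
`t > 0`. -/
def projectiveTransform (ν : ℝ) (m : ℝ → ℝ → ℝ) (x t : ℝ) : ℝ :=
  (x - m (x / (2 * ν * t)) (-1 / (4 * ν * t))) / t

variable {ν : ℝ} {m : ℝ → ℝ → ℝ} {x t : ℝ}

lemma neg_one_div_four_mul_neg (hν : 0 < ν) (ht : 0 < t) : -1 / (4 * ν * t) < 0 :=
  div_neg_of_neg_of_pos neg_one_lt_zero (by positivity)

lemma contDiffOn_projectiveTransform {n : WithTop ℕ∞} (hν : 0 < ν)
    (hm : ContDiffOn ℝ n (fun p : ℝ × ℝ => m p.1 p.2) {p | p.2 < 0}) :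
    ContDiffOn ℝ n (fun p : ℝ × ℝ => projectiveTransform ν m p.1 p.2)
      (Set.univ ×ˢ Set.Ioi (0 : ℝ)) := by
  have time_pos : ∀ p ∈ (Set.univ ×ˢ Set.Ioi (0 : ℝ) : Set (ℝ × ℝ)), 0 < p.2 := fun p hp => hp.2
  have params : ContDiffOn ℝ n
      (fun p : ℝ × ℝ => (p.1 / (2 * ν * p.2), -1 / (4 * ν * p.2))) (Set.univ ×ˢ Set.Ioi (0 : ℝ)) :=
    (ContDiffOn.div (by fun_prop) (by fun_prop)
      fun p hp => by have := time_pos p hp; positivity).prodMk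
    (ContDiffOn.div (by fun_prop) (by fun_prop)
      fun p hp => by have := time_pos p hp; positivity)
  exact (contDiffOn_fst.sub
    (hm.comp params fun p hp => neg_one_div_four_mul_neg hν (time_pos p hp))).div
    contDiffOn_snd fun p hp => (time_pos p hp).ne'

lemma qd1_projectiveTransform
    (hm : DifferentiableAt ℝ (fun p : ℝ × ℝ => m p.1 p.2) (x / (2 * ν * t), -1 / (4 * ν * t))) :
    qd1 (projectiveTransform ν m) x t =
      (1 - qd1 m (x / (2 * ν * t)) (-1 / (4 * ν * t)) / (2 * ν * t)) / t := by
  have inner := hasDerivAt_comp_curve (α := fun y => y / (2 * ν * t)) hm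
    ((hasDerivAt_id x).div_const _) (hasDerivAt_const x _)
  rw [mul_zero, add_zero, mul_one_div] at inner
  exact (((hasDerivAt_id x).sub inner).div_const t).deriv

lemma qd1_qd1_projectiveTransform
    (hm : ∀ a, DifferentiableAt ℝ (fun p : ℝ × ℝ => m p.1 p.2) (a, -1 / (4 * ν * t))) :
    qd1 (qd1 (projectiveTransform ν m)) x t =
      -(qd1 (qd1 m) (x / (2 * ν * t)) (-1 / (4 * ν * t)) / (2 * ν * t) ^ 2) / t := by
  have inner : deriv (fun y => qd1 m (y / (2 * ν * t)) (-1 / (4 * ν * t))) x =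
      qd1 (qd1 m) (x / (2 * ν * t)) (-1 / (4 * ν * t)) / (2 * ν * t) := by
    simp only [div_eq_inv_mul _ (2 * ν * t)]
    exact deriv_comp_mul_left _ (fun a => qd1 m a (-1 / (4 * ν * t))) x
  rw [qd1, funext fun y => qd1_projectiveTransform (hm (y / (2 * ν * t))), deriv_div_const,
    deriv_const_sub, deriv_div_const, inner, div_div, ← sq]

lemma qd2_projectiveTransform (hν : ν ≠ 0) (ht : t ≠ 0)
    (hm : DifferentiableAt ℝ (fun p : ℝ × ℝ => m p.1 p.2) (x / (2 * ν * t), -1 / (4 * ν * t))) :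
    qd2 (projectiveTransform ν m) x t =
      (x * qd1 m (x / (2 * ν * t)) (-1 / (4 * ν * t)) / (2 * ν) -
        qd2 m (x / (2 * ν * t)) (-1 / (4 * ν * t)) / (4 * ν)) / t ^ 3 -
        projectiveTransform ν m x t / t := by
  have hα : HasDerivAt (fun s => x / (2 * ν * s)) (-x / (2 * ν * t ^ 2)) t :=
    ((hasDerivAt_const t x).div ((hasDerivAt_id t).const_mul (2 * ν))
      (by simpa using ⟨hν, ht⟩)).congr_deriv (by simp only [id]; field_simp; ring)
  have hβ : HasDerivAt (fun s => -1 / (4 * ν * s)) (1 / (4 * ν * t ^ 2)) t :=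
    ((hasDerivAt_const t (-1)).div ((hasDerivAt_id t).const_mul (4 * ν))
      (by simpa using ⟨hν, ht⟩)).congr_deriv (by simp only [id]; field_simp; ring)
  refine ((((hasDerivAt_comp_curve hm hα hβ).const_sub x).div
    (hasDerivAt_id t) ht).congr_deriv ?_).deriv
  simp only [projectiveTransform, id]
  field_simp
  ring

theorem projectiveTransform_solves_burgers (hν : ν ≠ 0) (ht : t ≠ 0)
    (hm : ∀ a, DifferentiableAt ℝ (fun p : ℝ × ℝ => m p.1 p.2) (a, -1 / (4 * ν * t)))
    (hburgers : qd2 m (x / (2 * ν * t)) (-1 / (4 * ν * t)) =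
      qd1 (qd1 m) (x / (2 * ν * t)) (-1 / (4 * ν * t)) +
        2 * m (x / (2 * ν * t)) (-1 / (4 * ν * t)) *
          qd1 m (x / (2 * ν * t)) (-1 / (4 * ν * t))) :
    qd2 (projectiveTransform ν m) x t +
        projectiveTransform ν m x t * qd1 (projectiveTransform ν m) x t =
      ν * qd1 (qd1 (projectiveTransform ν m)) x t := by
  rw [qd2_projectiveTransform hν ht (hm _), qd1_projectiveTransform (hm _),
    qd1_qd1_projectiveTransform hm, hburgers, projectiveTransform]
  field_simp
  ring

end ProjectiveTransform

section QuadraticExponentialFamily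

/-- The unnormalised `n`-th moment of the exponential family `exp (a η + b η²) dμ(η)`, as a function
of the natural parameters `p = (a, b)`. -/
def expMoment (μ : Measure ℝ) (n : ℕ) (p : ℝ × ℝ) : ℝ :=
  ∫ η, η ^ n * Real.exp (p.1 * η + p.2 * η ^ 2) ∂μ

/-- The `n`-th moment of the probability measure proportional to `exp (a η + b η²) dμ(η)`. -/
def tiltedMoment (μ : Measure ℝ) (n : ℕ) (a b : ℝ) : ℝ :=
  expMoment μ n (a, b) / expMoment μ 0 (a, b)

lemma mul_le_sq_div_add_mul_sq {δ : ℝ} (hδ : 0 < δ) (c s : ℝ) :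
    c * s ≤ c ^ 2 / (4 * δ) + δ * s ^ 2 := by
  have square : c ^ 2 / (4 * δ) + δ * s ^ 2 - c * s = (c - 2 * δ * s) ^ 2 / (4 * δ) := by
    field_simp
    ring
  linarith [show 0 ≤ (c - 2 * δ * s) ^ 2 / (4 * δ) by positivity]

lemma abs_pow_mul_exp_le {A δ b : ℝ} {p : ℝ × ℝ} (hδ : 0 < δ) (ha : |p.1| ≤ A) (hb : p.2 ≤ b - δ)
    (n : ℕ) (η : ℝ) :
    |η ^ n * Real.exp (p.1 * η + p.2 * η ^ 2)| ≤
      n.factorial * Real.exp ((A + 1) ^ 2 / (4 * δ)) * Real.exp (b * η ^ 2) := by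
  have power_le : |η| ^ n ≤ n.factorial * Real.exp |η| :=
    (div_le_iff₀' (by positivity)).1 (Real.pow_div_factorial_le_exp |η| (abs_nonneg η) n)
  have linear_le : p.1 * η ≤ A * |η| :=
    (le_abs_self _).trans (abs_mul p.1 η ▸ mul_le_mul_of_nonneg_right ha (abs_nonneg η))
  have quadratic_le : p.2 * η ^ 2 ≤ (b - δ) * η ^ 2 := by gcongr
  have absorb : (A + 1) * |η| ≤ (A + 1) ^ 2 / (4 * δ) + δ * η ^ 2 :=
    sq_abs η ▸ mul_le_sq_div_add_mul_sq hδ (A + 1) |η|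
  calc |η ^ n * Real.exp (p.1 * η + p.2 * η ^ 2)|
      = |η| ^ n * Real.exp (p.1 * η + p.2 * η ^ 2) := by rw [abs_mul, abs_pow, Real.abs_exp]
    _ ≤ n.factorial * Real.exp |η| * Real.exp (p.1 * η + p.2 * η ^ 2) := by gcongr
    _ = n.factorial * Real.exp (|η| + (p.1 * η + p.2 * η ^ 2)) := by
        rw [mul_assoc, ← Real.exp_add]
    _ ≤ n.factorial * Real.exp ((A + 1) ^ 2 / (4 * δ) + b * η ^ 2) := by
        gcongr n.factorial * Real.exp ?_
        linarith
    _ = n.factorial * Real.exp ((A + 1) ^ 2 / (4 * δ)) * Real.exp (b * η ^ 2) := by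
        rw [Real.exp_add, mul_assoc]

variable {μ : Measure ℝ} {b : ℝ} {p : ℝ × ℝ}

lemma integrable_pow_mul_exp (hμ : Integrable (fun η => Real.exp (b * η ^ 2)) μ) (hp : p.2 < b)
    (n : ℕ) : Integrable (fun η => η ^ n * Real.exp (p.1 * η + p.2 * η ^ 2)) μ :=
  (hμ.const_mul _).mono' (Continuous.aestronglyMeasurable (by fun_prop))
    (.of_forall (abs_pow_mul_exp_le (sub_pos.2 hp) le_rfl (by simp) n))

lemma hasFDerivAt_pow_mul_exp (n : ℕ) (η : ℝ) (p : ℝ × ℝ) :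
    HasFDerivAt (fun q : ℝ × ℝ => η ^ n * Real.exp (q.1 * η + q.2 * η ^ 2))
      ((η ^ (n + 1) * Real.exp (p.1 * η + p.2 * η ^ 2)) • ContinuousLinearMap.fst ℝ ℝ ℝ +
        (η ^ (n + 2) * Real.exp (p.1 * η + p.2 * η ^ 2)) • ContinuousLinearMap.snd ℝ ℝ ℝ) p := by
  have exponent : HasFDerivAt (fun q : ℝ × ℝ => q.1 * η + q.2 * η ^ 2)
      (η • ContinuousLinearMap.fst ℝ ℝ ℝ + η ^ 2 • ContinuousLinearMap.snd ℝ ℝ ℝ) p :=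
    (hasFDerivAt_fst.mul_const η).add (hasFDerivAt_snd.mul_const (η ^ 2))
  refine (exponent.exp.const_mul (η ^ n)).congr_fderiv ?_
  rw [smul_add, smul_add, smul_smul, smul_smul, smul_smul, smul_smul]
  congr 2 <;> ring

lemma norm_smul_fst_add_smul_snd_le (c d : ℝ) :
    ‖c • ContinuousLinearMap.fst ℝ ℝ ℝ + d • ContinuousLinearMap.snd ℝ ℝ ℝ‖ ≤ |c| + |d| := by
  refine (norm_add_le _ _).trans (add_le_add ?_ ?_) <;> rw [norm_smul]
  · exact mul_le_of_le_one_right (norm_nonneg c) (ContinuousLinearMap.norm_fst_le ℝ ℝ ℝ)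
  · exact mul_le_of_le_one_right (norm_nonneg d) (ContinuousLinearMap.norm_snd_le ℝ ℝ ℝ)

lemma hasFDerivAt_expMoment (hμ : Integrable (fun η => Real.exp (b * η ^ 2)) μ) (hp : p.2 < b)
    (n : ℕ) :
    HasFDerivAt (expMoment μ n)
      (expMoment μ (n + 1) p • ContinuousLinearMap.fst ℝ ℝ ℝ +
        expMoment μ (n + 2) p • ContinuousLinearMap.snd ℝ ℝ ℝ) p := by
  obtain ⟨c, hpc, hcb⟩ := exists_between hp
  have nhds_params : {q : ℝ × ℝ | |q.1| < |p.1| + 1 ∧ q.2 < c} ∈ nhds p :=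
    (((continuous_fst.abs.tendsto p).eventually_lt_const (lt_add_one |p.1|)).and
      ((continuous_snd.tendsto p).eventually_lt_const hpc))
  have bound {q : ℝ × ℝ} (hq : |q.1| < |p.1| + 1 ∧ q.2 < c) :=
    abs_pow_mul_exp_le (sub_pos.2 hcb) hq.1.le (hq.2.le.trans_eq (sub_sub_cancel b c).symm)
  have under_integral := hasFDerivAt_integral_of_dominated_of_fderiv_le nhds_params
    (.of_forall fun q => Continuous.aestronglyMeasurable (by fun_prop))
    (integrable_pow_mul_exp hμ hp n) (Continuous.aestronglyMeasurable (by fun_prop))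
    (.of_forall fun η q hq => (norm_smul_fst_add_smul_snd_le _ _).trans
      (add_le_add (bound hq (n + 1) η) (bound hq (n + 2) η)))
    ((hμ.const_mul _).add (hμ.const_mul _))
    (.of_forall fun η q _ => hasFDerivAt_pow_mul_exp n η q)
  refine under_integral.congr_fderiv ?_
  rw [integral_add ((integrable_pow_mul_exp hμ hp _).smul_const _)
    ((integrable_pow_mul_exp hμ hp _).smul_const _), integral_smul_const, integral_smul_const]
  rfl

lemma contDiffOn_expMoment (hμ : Integrable (fun η => Real.exp (b * η ^ 2)) μ) (n : ℕ) :
    ContDiffOn ℝ (⊤ : ℕ∞) (expMoment μ n) {p | p.2 < b} := by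
  have isOpen_params : IsOpen {p : ℝ × ℝ | p.2 < b} := isOpen_lt (by fun_prop) (by fun_prop)
  refine contDiffOn_infty.2 fun k => ?_
  induction k generalizing n with
  | zero =>
    exact contDiffOn_zero.2 fun p hp =>
      (hasFDerivAt_expMoment hμ hp n).continuousAt.continuousWithinAt
  | succ k ih =>
    rw [Nat.cast_succ, contDiffOn_succ_iff_fderiv_of_isOpen isOpen_params]
    refine ⟨fun p hp =>
      (hasFDerivAt_expMoment hμ hp n).differentiableAt.differentiableWithinAt, by simp, ?_⟩
    exact (((ih (n + 1)).smul contDiffOn_const).add ((ih (n + 2)).smul contDiffOn_const)).congr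
      fun p hp => (hasFDerivAt_expMoment hμ hp n).fderiv

variable [NeZero μ]

lemma expMoment_zero_pos (hμ : Integrable (fun η => Real.exp (b * η ^ 2)) μ) (hp : p.2 < b) :
    0 < expMoment μ 0 p := by
  have integrable_density := integrable_pow_mul_exp hμ hp 0
  simp only [expMoment, pow_zero, one_mul] at integrable_density ⊢
  exact integral_exp_pos integrable_density

lemma contDiffAt_tiltedMoment (hμ : Integrable (fun η => Real.exp (b * η ^ 2)) μ) (hp : p.2 < b)
    (n : ℕ) : ContDiffAt ℝ (⊤ : ℕ∞) (fun q : ℝ × ℝ => tiltedMoment μ n q.1 q.2) p :=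
  ((contDiffOn_expMoment hμ n).div (contDiffOn_expMoment hμ 0)
    fun _ hq => (expMoment_zero_pos hμ hq).ne').contDiffAt
    ((isOpen_lt (by fun_prop) (by fun_prop)).mem_nhds hp)

variable {c : ℝ}

lemma hasDerivAt_tiltedMoment_left (hμ : Integrable (fun η => Real.exp (c * η ^ 2)) μ) (hb : b < c)
    (n : ℕ) (a : ℝ) :
    HasDerivAt (fun s => tiltedMoment μ n s b)
      (tiltedMoment μ (n + 1) a b - tiltedMoment μ n a b * tiltedMoment μ 1 a b) a := by
  have hasDerivAt_expMoment (k : ℕ) :=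
    hasDerivAt_left_of_hasFDerivAt (hasFDerivAt_expMoment (p := (a, b)) hμ hb k)
  have mass_ne_zero := (expMoment_zero_pos (p := (a, b)) hμ hb).ne'
  refine ((hasDerivAt_expMoment n).div (hasDerivAt_expMoment 0) mass_ne_zero).congr_deriv ?_
  simp only [add_apply, smul_apply, ContinuousLinearMap.coe_fst', smul_eq_mul, mul_one,
    ContinuousLinearMap.coe_snd', mul_zero, add_zero, zero_add, tiltedMoment]
  field_simp

lemma hasDerivAt_tiltedMoment_right (hμ : Integrable (fun η => Real.exp (c * η ^ 2)) μ) (hb : b < c)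
    (n : ℕ) (a : ℝ) :
    HasDerivAt (fun s => tiltedMoment μ n a s)
      (tiltedMoment μ (n + 2) a b - tiltedMoment μ n a b * tiltedMoment μ 2 a b) b := by
  have hasDerivAt_expMoment (k : ℕ) :=
    hasDerivAt_right_of_hasFDerivAt (hasFDerivAt_expMoment (p := (a, b)) hμ hb k)
  have mass_ne_zero := (expMoment_zero_pos (p := (a, b)) hμ hb).ne'
  refine ((hasDerivAt_expMoment n).div (hasDerivAt_expMoment 0) mass_ne_zero).congr_deriv ?_
  simp only [add_apply, smul_apply, ContinuousLinearMap.coe_fst', smul_eq_mul, mul_zero,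
    ContinuousLinearMap.coe_snd', mul_one, zero_add, tiltedMoment]
  field_simp

theorem tiltedMoment_one_solves_burgers (hμ : Integrable (fun η => Real.exp (c * η ^ 2)) μ)
    (hb : b < c) (a : ℝ) :
    qd2 (tiltedMoment μ 1) a b =
      qd1 (qd1 (tiltedMoment μ 1)) a b + 2 * tiltedMoment μ 1 a b * qd1 (tiltedMoment μ 1) a b := by
  have deriv_left (n : ℕ) := hasDerivAt_tiltedMoment_left hμ hb n
  have variance_deriv : qd1 (qd1 (tiltedMoment μ 1)) a b =
      qd1 (tiltedMoment μ 2) a b - 2 * tiltedMoment μ 1 a b * qd1 (tiltedMoment μ 1) a b := by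
    have variance : (fun s => qd1 (tiltedMoment μ 1) s b) =
        (fun s => tiltedMoment μ 2 s b) - (fun s => tiltedMoment μ 1 s b) ^ 2 := by
      funext s
      rw [qd1, (deriv_left 1 s).deriv, ← sq]
      rfl
    have moment_differentiable (n : ℕ) := (deriv_left n a).differentiableAt.hasDerivAt
    rw [qd1, variance, ((moment_differentiable 2).sub ((moment_differentiable 1).pow 2)).deriv]
    simp only [qd1]
    ring
  have covariance_symm : qd2 (tiltedMoment μ 1) a b = qd1 (tiltedMoment μ 2) a b := by
    rw [qd1, qd2, (hasDerivAt_tiltedMoment_right hμ hb 1 a).deriv, (deriv_left 2 a).deriv,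
      mul_comm (tiltedMoment μ 1 a b)]
  rw [variance_deriv, covariance_symm, sub_add_cancel]

end QuadraticExponentialFamily

section ColeHopf

lemma integral_withDensity_exp {X : Type*} [MeasurableSpace X] {μ : Measure X} {u : X → ℝ}
    (hu : AEMeasurable u μ) (f : X → ℝ) :
    ∫ η, f η ∂μ.withDensity (fun η => ENNReal.ofReal (Real.exp (u η))) =
      ∫ η, f η * Real.exp (u η) ∂μ := by
  rw [integral_withDensity_eq_integral_toReal_smul₀ (by fun_prop) (by simp)]
  simp only [ENNReal.toReal_ofReal (Real.exp_pos _).le, smul_eq_mul, mul_comm]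

lemma integrable_withDensity_exp_iff {X : Type*} [MeasurableSpace X] {μ : Measure X} {u : X → ℝ}
    (hu : AEMeasurable u μ) {f : X → ℝ} :
    Integrable f (μ.withDensity fun η => ENNReal.ofReal (Real.exp (u η))) ↔
      Integrable (fun η => f η * Real.exp (u η)) μ := by
  rw [integrable_withDensity_iff_integrable_smul₀' (by fun_prop) (by simp)]
  simp only [ENNReal.toReal_ofReal (Real.exp_pos _).le, smul_eq_mul, mul_comm]

lemma neZero_withDensity_exp {X : Type*} [MeasurableSpace X] {μ : Measure X} [NeZero μ] {u : X → ℝ}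
    (hu : AEMeasurable u μ) :
    NeZero (μ.withDensity fun η => ENNReal.ofReal (Real.exp (u η))) := by
  refine ⟨fun density_zero => NeZero.ne μ (Measure.measure_univ_eq_zero.1 ?_)⟩
  exact withDensity_absolutelyContinuous' (by fun_prop)
    (.of_forall fun η => (ENNReal.ofReal_pos.2 (Real.exp_pos (u η))).ne') (by simp [density_zero])

lemma integral_gaussian_div_integral_gaussian {μ : Measure ℝ} [NeZero μ] {ν c t : ℝ}
    (hν : ν ≠ 0) (ht : t ≠ 0) (hμ : Integrable (fun η => Real.exp (c * η ^ 2)) μ)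
    (hc : -1 / (4 * ν * t) < c) (x : ℝ) :
    (∫ η, (x - η) / t * Real.exp (-(x - η) ^ 2 / (4 * ν * t)) ∂μ) /
        (∫ η, Real.exp (-(x - η) ^ 2 / (4 * ν * t)) ∂μ) =
      projectiveTransform ν (tiltedMoment μ 1) x t := by
  set p : ℝ × ℝ := (x / (2 * ν * t), -1 / (4 * ν * t)) with hp
  set w := Real.exp (-x ^ 2 / (4 * ν * t))
  have complete_square (η : ℝ) : Real.exp (-(x - η) ^ 2 / (4 * ν * t)) =
      w * Real.exp (p.1 * η + p.2 * η ^ 2) := by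
    rw [← Real.exp_add]
    congr 1
    simp only [hp]
    field_simp
    ring
  have denominator : ∫ η, Real.exp (-(x - η) ^ 2 / (4 * ν * t)) ∂μ = w * expMoment μ 0 p := by
    simp only [complete_square, integral_const_mul, expMoment, pow_zero, one_mul]
  have numerator : ∫ η, (x - η) / t * Real.exp (-(x - η) ^ 2 / (4 * ν * t)) ∂μ =
      w * ((x * expMoment μ 0 p - expMoment μ 1 p) / t) := by
    rw [expMoment, expMoment, ← integral_const_mul, ← integral_sub
      ((integrable_pow_mul_exp hμ hc 0).const_mul x) (integrable_pow_mul_exp hμ hc 1),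
      ← integral_div, ← integral_const_mul]
    refine integral_congr_ae (.of_forall fun η => ?_)
    simp only [complete_square]
    ring
  have mass_ne_zero := (expMoment_zero_pos (p := p) hμ hc).ne'
  rw [numerator, denominator, mul_div_mul_left _ _ (Real.exp_pos _).ne', projectiveTransform,
    tiltedMoment, ← hp, sub_div' mass_ne_zero, div_right_comm]

/-- The measure `exp (-U / (2 ν)) dη`: the initial datum of the heat equation to which the Cole–Hopf
substitution reduces the Burgers equation with initial velocity `U'`. -/
def initialMeasure (ν : ℝ) (U : ℝ → ℝ) : Measure ℝ :=
  volume.withDensity fun η => ENNReal.ofReal (Real.exp (-U η / (2 * ν)))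

variable {ν : ℝ} {U : ℝ → ℝ}

lemma aemeasurable_potential_of_integrable (hν : ν ≠ 0) {t : ℝ}
    (hU : Integrable fun η => Real.exp (-(U η + η ^ 2 / (2 * t)) / (2 * ν))) : AEMeasurable U := by
  have exponent := Real.aemeasurable_of_aemeasurable_exp hU.aemeasurable
  have potential : U = fun η =>
      -(2 * ν) * (-(U η + η ^ 2 / (2 * t)) / (2 * ν)) - η ^ 2 / (2 * t) := by
    funext η
    field_simp
    ring
  rw [potential]
  exact (exponent.const_mul _).sub (by fun_prop)

lemma neZero_initialMeasure (hU : AEMeasurable U) : NeZero (initialMeasure ν U) :=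
  neZero_withDensity_exp (by fun_prop)

lemma integrable_gaussian_initialMeasure (hν : 0 < ν)
    (hU : ∀ t, 0 < t → Integrable fun η => Real.exp (-(U η + η ^ 2 / (2 * t)) / (2 * ν)))
    {b : ℝ} (hb : b < 0) : Integrable (fun η => Real.exp (b * η ^ 2)) (initialMeasure ν U) := by
  have potential_measurable := aemeasurable_potential_of_integrable hν.ne' (hU 1 one_pos)
  refine (integrable_withDensity_exp_iff (by fun_prop)).2 ((hU (-1 / (4 * ν * b))
    (div_pos_of_neg_of_neg neg_one_lt_zero (mul_neg_of_pos_of_neg (by positivity) hb))).congr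
    (.of_forall fun η => ?_))
  simp only [← Real.exp_add]
  congr 1
  field_simp
  ring

lemma coleHopf_eq_projectiveTransform (hν : 0 < ν)
    (hU : ∀ t, 0 < t → Integrable fun η => Real.exp (-(U η + η ^ 2 / (2 * t)) / (2 * ν)))
    {t : ℝ} (ht : 0 < t) (x : ℝ) :
    (∫ η, (x - η) / t * Real.exp (-(U η + (x - η) ^ 2 / (2 * t)) / (2 * ν))) /
        (∫ η, Real.exp (-(U η + (x - η) ^ 2 / (2 * t)) / (2 * ν))) =
      projectiveTransform ν (tiltedMoment (initialMeasure ν U) 1) x t := by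
  have potential_measurable := aemeasurable_potential_of_integrable hν.ne' (hU 1 one_pos)
  have log_density_measurable : AEMeasurable fun η => -U η / (2 * ν) := by fun_prop
  have := neZero_initialMeasure (ν := ν) potential_measurable
  obtain ⟨c, hc, c_neg⟩ := exists_between (neg_one_div_four_mul_neg hν ht)
  have split_exp (η : ℝ) : Real.exp (-(U η + (x - η) ^ 2 / (2 * t)) / (2 * ν)) =
      Real.exp (-(x - η) ^ 2 / (4 * ν * t)) * Real.exp (-U η / (2 * ν)) := by
    rw [← Real.exp_add]
    congr 1
    field_simp
    ring
  rw [← integral_gaussian_div_integral_gaussian hν.ne' ht.ne'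
    (integrable_gaussian_initialMeasure hν hU c_neg) hc, initialMeasure,
    integral_withDensity_exp log_density_measurable,
    integral_withDensity_exp log_density_measurable]
  simp only [split_exp, mul_assoc]

theorem cole_hopf_solves_burgers_general
    (ν : ℝ) (hν : 0 < ν)
    (U : ℝ → ℝ)
    (hU : ∀ t : ℝ, 0 < t → Integrable fun η => Real.exp (-(U η + η ^ 2 / (2 * t)) / (2 * ν)))
    (G : ℝ → ℝ → ℝ → ℝ)
    (hG : ∀ η x t : ℝ, G η x t = U η + (x - η) ^ 2 / (2 * t))
    (v : ℝ → ℝ → ℝ)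
    (hv : ∀ x t : ℝ, v x t =
      (∫ η : ℝ, ((x - η) / t) * Real.exp (-(G η x t) / (2 * ν))) /
        (∫ η : ℝ, Real.exp (-(G η x t) / (2 * ν)))) :
    ContDiffOn ℝ (⊤ : ℕ∞) (fun p : ℝ × ℝ => v p.1 p.2) (Set.univ ×ˢ Set.Ioi (0 : ℝ)) ∧
    ∀ x t : ℝ, 0 < t →
      qd2 v x t + v x t * qd1 v x t = ν * qd1 (qd1 v) x t := by
  have v_eq {x t : ℝ} (ht : 0 < t) :
      v x t = projectiveTransform ν (tiltedMoment (initialMeasure ν U) 1) x t := by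
    simp only [hv, hG, coleHopf_eq_projectiveTransform hν hU ht]
  have potential_measurable := aemeasurable_potential_of_integrable hν.ne' (hU 1 one_pos)
  have := neZero_initialMeasure (ν := ν) potential_measurable
  have smooth_mean {p : ℝ × ℝ} (hp : p.2 < 0) : ContDiffAt ℝ (⊤ : ℕ∞)
      (fun q : ℝ × ℝ => tiltedMoment (initialMeasure ν U) 1 q.1 q.2) p :=
    let ⟨_, hpc, hc⟩ := exists_between hp
    contDiffAt_tiltedMoment (integrable_gaussian_initialMeasure hν hU hc) hpc 1
  constructor
  · exact (contDiffOn_projectiveTransform hν fun p hp => (smooth_mean hp).contDiffWithinAt).congr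
      fun p hp => v_eq hp.2
  · intro x t ht
    obtain ⟨c, hc, c_neg⟩ := exists_between (neg_one_div_four_mul_neg hν ht)
    rw [qd2_congr ((lt_mem_nhds ht).mono fun s hs => v_eq hs), v_eq ht,
      qd1_congr (fun _ => v_eq ht), qd1_congr (qd1_congr fun _ => v_eq ht)]
    exact projectiveTransform_solves_burgers hν.ne' ht.ne'
      (fun a => (smooth_mean (hc.trans c_neg)).differentiableAt (by simp))
      (tiltedMoment_one_solves_burgers (integrable_gaussian_initialMeasure hν hU c_neg) hc _)

lemma integrable_exp_neg_of_neg_mul_abs_le (hν : 0 < ν) {M : ℝ}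
    (hU : AEStronglyMeasurable U) (hM : ∀ η, -(M * |η|) ≤ U η) {t : ℝ} (ht : 0 < t) :
    Integrable fun η => Real.exp (-(U η + η ^ 2 / (2 * t)) / (2 * ν)) := by
  have gaussian : Integrable fun η : ℝ => Real.exp (-(1 / (8 * ν * t)) * η ^ 2) :=
    integrable_exp_neg_mul_sq (by positivity)
  refine (gaussian.const_mul (Real.exp (M ^ 2 * t / (2 * ν)))).mono'
    (by fun_prop) (.of_forall fun η => ?_)
  have absorb : M * |η| ≤ M ^ 2 * t + η ^ 2 / (4 * t) := by
    refine (mul_le_sq_div_add_mul_sq (δ := 1 / (4 * t)) (by positivity) M |η|).trans_eq ?_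
    rw [sq_abs]
    field_simp
  rw [Real.norm_eq_abs, Real.abs_exp, ← Real.exp_add]
  gcongr
  calc -(U η + η ^ 2 / (2 * t)) / (2 * ν)
      ≤ (M ^ 2 * t + η ^ 2 / (4 * t) - η ^ 2 / (2 * t)) / (2 * ν) := by
        gcongr
        linarith [hM η]
    _ = M ^ 2 * t / (2 * ν) + -(1 / (8 * ν * t)) * η ^ 2 := by
        field_simp
        ring

lemma integrable_exp_neg_primitive (hν : 0 < ν) {v₀ : ℝ → ℝ} (hcont : Continuous v₀) {M : ℝ}
    (hM : ∀ s, |v₀ s| ≤ M) {t : ℝ} (ht : 0 < t) :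
    Integrable fun η => Real.exp (-((∫ s in (0 : ℝ)..η, v₀ s) + η ^ 2 / (2 * t)) / (2 * ν)) := by
  have continuous_primitive : Continuous fun η => ∫ s in (0 : ℝ)..η, v₀ s :=
    intervalIntegral.continuous_primitive (fun a b => hcont.intervalIntegrable a b) 0
  have primitive_growth (η : ℝ) : |∫ s in (0 : ℝ)..η, v₀ s| ≤ M * |η| := by
    simpa using intervalIntegral.norm_integral_le_of_norm_le_const (a := 0) (b := η)
      fun s _ => (Real.norm_eq_abs _).trans_le (hM s)
  exact integrable_exp_neg_of_neg_mul_abs_le hν continuous_primitive.aestronglyMeasurable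
    (fun η => neg_le_of_abs_le (primitive_growth η)) ht

end ColeHopf

/-- The Cole–Hopf function is smooth in `(x,t)` for `t > 0` and solves the
Burgers equation `v_t + v v_x = ν v_xx` there. -/
theorem cole_hopf_solves_burgers
    (ν : ℝ) (hν : 0 < ν)
    (v₀ : ℝ → ℝ) (hcont : Continuous v₀) (hbdd : ∃ M : ℝ, ∀ s : ℝ, |v₀ s| ≤ M)
    (G : ℝ → ℝ → ℝ → ℝ)
    (hG : ∀ η x t : ℝ, G η x t = (∫ s in (0 : ℝ)..η, v₀ s) + (x - η) ^ 2 / (2 * t))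
    (v : ℝ → ℝ → ℝ)
    (hv : ∀ x t : ℝ, v x t =
      (∫ η : ℝ, ((x - η) / t) * Real.exp (-(G η x t) / (2 * ν))) /
        (∫ η : ℝ, Real.exp (-(G η x t) / (2 * ν)))) :
    ContDiffOn ℝ (⊤ : ℕ∞) (fun p : ℝ × ℝ => v p.1 p.2) (Set.univ ×ˢ Set.Ioi (0 : ℝ)) ∧
    ∀ x t : ℝ, 0 < t →
      qd2 v x t + v x t * qd1 v x t = ν * qd1 (qd1 v) x t := by
  obtain ⟨M, hM⟩ := hbdd
  exact cole_hopf_solves_burgers_general ν hν _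
    (fun _ ht => integrable_exp_neg_primitive hν hcont hM ht) G hG v hv
end
end
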